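/- arXiv:2605.14669 — 3 statements merged into one kernel-verified Lean document; each statement's English description precedes it below -/
import Mathlib

section
/- Fix a real α ≥ 1 and θ ∈ (0, π). Let ξ(φ) := 1 − 2·Θ_{1/α}(φ)^α · exp(−i·(π−φ)/(1+1/α)) for φ ∈ (0, π), and let ξ′(θ) denote the derivative of ξ at θ. Then Re( [(1+α)/(4α²)] · e^{−i(π − 2α(π−θ)/(1+α))} · Θ_{1/α}(θ)^{1−2α} · (ξ′(θ))² / (e^{i(π−θ)/(1+α)} − Θ_{1/α}(θ)) ) < 0. (This complex number equals the second derivative f_θ″(θ) of the phase function at the saddle point, so the statement asserts Re f_θ″(θ) < 0.) -/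
open Real Filter Set Topology

/-- `Th α t = sin t / ((1+α)·sin((π−t)/(1+α)))`; `Th (1/α)` is `Θ_{1/α}`. -/
noncomputable def Th (α t : ℝ) : ℝ :=
  Real.sin t / ((1 + α) * Real.sin ((Real.pi - t) / (1 + α)))

/-- `xi α φ = 1 − 2·Θ_{1/α}(φ)^α · exp(−i(π−φ)/(1+1/α))`. -/
noncomputable def xi (α φ : ℝ) : ℂ :=
  1 - ((2 * (Th (1/α) φ) ^ α : ℝ) : ℂ) *
    Complex.exp (-Complex.I * (((Real.pi - φ) / (1 + 1/α) : ℝ) : ℂ))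

/-!
Write `v = (π - θ) / (1 + α)` and `p = αv`, so that `θ + p + v = π`, and `z = exp (-ip)`. The
logarithmic derivative of `1 - ξ` and the denominator `exp (iv) - Θ` are, up to positive real
factors, `a - bz` and `b - az`, where `a = (1 + α) sin v` and `b = sin θ`; hence `f_θ″(θ)` is a
negative multiple of `(a - bz)² / (b - az)`. This quotient has positive real part because
`a cos p ≤ b < a`, and both inequalities say that `sin x / x` decreases on `(0, π]`.
-/

lemma mul_sin_lt_mul_sin {x y : ℝ} (hx : 0 < x) (hxy : x < y) (hy : y ≤ π) :
    x * sin y < y * sin x := by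
  have hy0 : 0 < y := hx.trans hxy
  have hslope := strictConcaveOn_sin_Icc.secant_strict_mono (a := 0) (x := x) (y := y)
    ⟨le_rfl, pi_pos.le⟩ ⟨hx.le, hxy.le.trans hy⟩ ⟨hy0.le, hy⟩ hx.ne' hy0.ne' hxy
  rw [sin_zero, sub_zero, sub_zero, sub_zero, sub_zero, div_lt_div_iff₀ hy0 hx] at hslope
  linarith

lemma one_add_mul_sin_mul_cos_le {α v : ℝ} (hα : 1 ≤ α) (hv : 0 < v) (hαv : (1 + α) * v ≤ π) :
    (1 + α) * sin v * cos (α * v) ≤ sin ((1 + α) * v) := by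
  have hsinc : (α - 1) * sin ((1 + α) * v) ≤ (1 + α) * sin ((α - 1) * v) := by
    rcases hα.eq_or_lt with rfl | hα
    · simp
    · have h := mul_sin_lt_mul_sin (mul_pos (sub_pos.2 hα) hv)
        (mul_lt_mul_of_pos_right (by linarith : α - 1 < 1 + α) hv) hαv
      exact (lt_of_mul_lt_mul_left (by linarith) hv.le).le
  have hprod : 2 * (sin v * cos (α * v)) = sin ((1 + α) * v) - sin ((α - 1) * v) := by
    rw [one_add_mul, sub_one_mul, sin_add, sin_sub]
    ring
  linear_combination (1 / 2) * hsinc + (1 + α) / 2 * hprod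

lemma sin_mul_exp_add_sin_mul_exp (x y : ℂ) :
    Complex.sin x * Complex.exp (Complex.I * y) + Complex.sin y * Complex.exp (-Complex.I * x) =
      Complex.sin (x + y) := by
  rw [mul_comm Complex.I, neg_mul_comm, mul_comm Complex.I, Complex.exp_mul_I, Complex.exp_mul_I,
    Complex.cos_neg, Complex.sin_neg, Complex.sin_add]
  ring

lemma one_add_mul_cot_add_mul_cot_add_I {x y : ℂ} (hx : Complex.sin x ≠ 0)
    (hy : Complex.sin y ≠ 0) (c : ℂ) :
    (1 + c) * Complex.cot x + c * Complex.cot y + Complex.I =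
      ((1 + c) * Complex.sin (x + y) - Complex.sin x * Complex.exp (-Complex.I * y)) /
        (Complex.sin x * Complex.sin y) := by
  rw [neg_mul_comm, mul_comm Complex.I, Complex.exp_mul_I, Complex.cos_neg, Complex.sin_neg,
    Complex.sin_add, Complex.cot_eq_cos_div_sin, Complex.cot_eq_cos_div_sin]
  field_simp
  ring

lemma rpow_one_sub_two_mul_mul_rpow_sq {x : ℝ} (hx : 0 < x) (α : ℝ) :
    x ^ (1 - 2 * α) * (x ^ α) ^ 2 = x := by
  rw [← rpow_mul_natCast hx.le, ← rpow_add hx, Nat.cast_two, mul_comm α, sub_add_cancel, rpow_one]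

lemma re_sub_mul_sq_div_pos {a b : ℝ} {z : ℂ} (hz : ‖z‖ = 1) (hb : 0 < b) (hba : b < a)
    (hre : a * z.re ≤ b) : 0 < (((a : ℂ) - b * z) ^ 2 / (b - a * z)).re := by
  have hz2 : z.re ^ 2 + z.im ^ 2 = 1 := by
    rw [← one_pow 2, ← hz, Complex.sq_norm, Complex.normSq_apply]
    ring
  have : 0 ≤ b - a * z.re := sub_nonneg.2 hre
  have hd : 0 < a ^ 2 - b ^ 2 := sub_pos.2 (pow_lt_pow_left₀ hba hb.le two_ne_zero)
  have hN : Complex.normSq (b - a * z) = a ^ 2 - b ^ 2 + 2 * b * (b - a * z.re) := by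
    simp only [Complex.normSq_apply, Complex.sub_re, Complex.sub_im, Complex.re_ofReal_mul,
      Complex.im_ofReal_mul, Complex.ofReal_re, Complex.ofReal_im]
    linear_combination a ^ 2 * hz2
  have hN0 : 0 < Complex.normSq (b - a * z) := by
    rw [hN]
    positivity
  -- With `q = b - a * z`, `‖z‖ = 1` gives `a - b * z = -z * conj q`, so the quotient is
  -- `z ^ 2 * conj q ^ 3 / ‖q‖ ^ 2`; now substitute `a * z = b - q` and expand in `re q`, `‖q‖ ^ 2`.
  have hnum : a ^ 2 * (((a : ℂ) - b * z) ^ 2 / (b - a * z)).re * Complex.normSq (b - a * z) =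
      (b - a * z.re) * (a ^ 2 - b ^ 2) ^ 2 +
        b * Complex.normSq (b - a * z) * (2 * (a ^ 2 - b ^ 2) + b * (b - a * z.re)) := by
    rw [Complex.div_re, ← add_div, mul_assoc, div_mul_cancel₀ _ hN0.ne', hN]
    simp only [pow_two, Complex.mul_re, Complex.mul_im, Complex.sub_re, Complex.sub_im,
      Complex.ofReal_re, Complex.ofReal_im]
    linear_combination a ^ 2 * b * (2 * a ^ 2 - b ^ 2 - a * b * z.re) * hz2
  have hpos : 0 < a ^ 2 * (((a : ℂ) - b * z) ^ 2 / (b - a * z)).re *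
      Complex.normSq (b - a * z) := by
    rw [hnum]
    positivity
  exact pos_of_mul_pos_right (pos_of_mul_pos_left hpos hN0.le) (sq_nonneg a)

/-- The share `1 / (1 + β)` of the supplement of `t`. The angles `t`, `splitAngle α t` and
`splitAngle (1 / α) t` are those of a triangle; the last two are, up to sign, the arguments of the
exponentials in the denominator of the phase's second derivative and in `ξ`. -/
noncomputable def splitAngle (β t : ℝ) : ℝ := (π - t) / (1 + β)

lemma splitAngle_one_div {α : ℝ} (hα : 0 < α) (t : ℝ) :
    splitAngle (1 / α) t = α * splitAngle α t := by
  unfold splitAngle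
  field_simp
  ring

lemma one_add_mul_splitAngle {β : ℝ} (hβ : 0 ≤ β) (t : ℝ) :
    (1 + β) * splitAngle β t = π - t :=
  mul_div_cancel₀ _ (by positivity)

lemma add_splitAngle_add_splitAngle {α : ℝ} (hα : 0 < α) (t : ℝ) :
    t + splitAngle (1 / α) t + splitAngle α t = π := by
  rw [splitAngle_one_div hα]
  linear_combination one_add_mul_splitAngle hα.le t

lemma splitAngle_mem_Ioo {β t : ℝ} (hβ : 0 ≤ β) (ht : t ∈ Ioo 0 π) :
    splitAngle β t ∈ Ioo 0 π := by
  have hpos : 0 < splitAngle β t := div_pos (sub_pos.2 ht.2) (by positivity)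
  exact ⟨hpos, by nlinarith [one_add_mul_splitAngle hβ t, ht.1]⟩

lemma sin_splitAngle_pos {β t : ℝ} (hβ : 0 ≤ β) (ht : t ∈ Ioo 0 π) : 0 < sin (splitAngle β t) :=
  sin_pos_of_mem_Ioo (splitAngle_mem_Ioo hβ ht)

lemma sin_one_add_mul_splitAngle {β : ℝ} (hβ : 0 ≤ β) (t : ℝ) :
    sin ((1 + β) * splitAngle β t) = sin t := by
  rw [one_add_mul_splitAngle hβ, sin_pi_sub]

lemma sin_lt_one_add_mul_sin_splitAngle {β t : ℝ} (hβ : 0 < β) (ht : t ∈ Ioo 0 π) :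
    sin t < (1 + β) * sin (splitAngle β t) := by
  have hv : 0 < splitAngle β t := (splitAngle_mem_Ioo hβ.le ht).1
  have hle : (1 + β) * splitAngle β t ≤ π := by linarith [one_add_mul_splitAngle hβ.le t, ht.1]
  have h := mul_sin_lt_mul_sin hv (lt_mul_left hv (by linarith)) hle
  rw [sin_one_add_mul_splitAngle hβ.le] at h
  exact lt_of_mul_lt_mul_left (by linarith) hv.le

lemma one_add_mul_sin_splitAngle_mul_cos_le {α t : ℝ} (hα : 1 ≤ α) (ht : t ∈ Ioo 0 π) :
    (1 + α) * sin (splitAngle α t) * cos (splitAngle (1 / α) t) ≤ sin t := by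
  have hα0 : 0 < α := by linarith
  rw [splitAngle_one_div hα0, ← sin_one_add_mul_splitAngle hα0.le t]
  exact one_add_mul_sin_mul_cos_le hα (splitAngle_mem_Ioo hα0.le ht).1
    (by linarith [one_add_mul_splitAngle hα0.le t, ht.1])

lemma hasDerivAt_splitAngle (β t : ℝ) : HasDerivAt (splitAngle β) (-1 / (1 + β)) t :=
  ((hasDerivAt_id t).const_sub π).div_const (1 + β)

lemma Th_eq (β t : ℝ) : Th β t = sin t / ((1 + β) * sin (splitAngle β t)) := rfl

lemma Th_pos {β t : ℝ} (hβ : 0 ≤ β) (ht : t ∈ Ioo 0 π) : 0 < Th β t := by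
  have hs := sin_pos_of_mem_Ioo ht
  have hs' := sin_splitAngle_pos hβ ht
  rw [Th_eq]
  positivity

lemma hasDerivAt_Th {β t : ℝ} (hβ : 0 ≤ β) (ht : t ∈ Ioo 0 π) :
    HasDerivAt (Th β) (Th β t * (cot t + cot (splitAngle β t) / (1 + β))) t := by
  have hs := sin_pos_of_mem_Ioo ht
  have hs' := sin_splitAngle_pos hβ ht
  refine ((hasDerivAt_sin t).fun_div ((hasDerivAt_splitAngle β t).sin.const_mul (1 + β))
    (by positivity)).congr_deriv ?_
  rw [Th_eq, cot_eq_cos_div_sin, cot_eq_cos_div_sin]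
  field_simp
  ring

/-- The unimodular factor `exp (-i(π - φ) / (1 + 1/α))` of `1 - ξ(φ)`, where `|1 - ξ(φ)|` is
`2 Θ_{1/α}(φ) ^ α`. -/
noncomputable def xiPhase (α φ : ℝ) : ℂ := Complex.exp (-Complex.I * splitAngle (1 / α) φ)

lemma norm_xiPhase (α φ : ℝ) : ‖xiPhase α φ‖ = 1 := by
  rw [xiPhase, neg_mul, ← mul_neg, ← Complex.ofReal_neg, Complex.norm_exp_I_mul_ofReal]

lemma xiPhase_re (α φ : ℝ) : (xiPhase α φ).re = cos (splitAngle (1 / α) φ) := by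
  rw [xiPhase, neg_mul_comm, mul_comm, ← Complex.ofReal_neg, Complex.exp_ofReal_mul_I_re, cos_neg]

lemma exp_mul_xiPhase_sq {α : ℝ} (hα : 0 < α) (θ : ℝ) :
    Complex.exp (-Complex.I * ((π - 2 * α * (π - θ) / (1 + α) : ℝ) : ℂ)) * xiPhase α θ ^ 2 =
      -1 := by
  have hangle : π - 2 * α * (π - θ) / (1 + α) = π - 2 * splitAngle (1 / α) θ := by
    rw [splitAngle_one_div hα, splitAngle]
    ring
  rw [hangle, xiPhase, ← Complex.exp_nat_mul, ← Complex.exp_add, ← inv_inj, ← Complex.exp_neg,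
    inv_neg_one, ← Complex.exp_pi_mul_I]
  push_cast
  ring_nf

lemma hasDerivAt_xi {α θ : ℝ} (hα : 0 < α) (hθ : θ ∈ Ioo 0 π) :
    HasDerivAt (xi α) (-2 * α * (Th (1 / α) θ ^ α : ℝ) * xiPhase α θ *
      ((((1 + α) * sin (splitAngle α θ) : ℝ) - sin θ * xiPhase α θ) /
        ((1 + α) * sin θ * sin (splitAngle (1 / α) θ)))) θ := by
  have hβ : 0 ≤ 1 / α := by positivity
  have hT : Th (1 / α) θ ≠ 0 := (Th_pos hβ hθ).ne'
  have hmod : HasDerivAt (fun φ ↦ 2 * Th (1 / α) φ ^ α)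
      (2 * α * Th (1 / α) θ ^ α *
        (((1 + α) * cot θ + α * cot (splitAngle (1 / α) θ)) / (1 + α))) θ := by
    refine (((hasDerivAt_Th hβ hθ).rpow_const (Or.inl hT)).const_mul 2).congr_deriv ?_
    rw [rpow_sub_one hT]
    field_simp
    ring
  have hphase : HasDerivAt (xiPhase α) (xiPhase α θ * (α * Complex.I / (1 + α))) θ := by
    refine ((hasDerivAt_splitAngle (1 / α) θ).ofReal_comp.const_mul
      (-Complex.I)).cexp.congr_deriv ?_
    have : (-1 / (1 + 1 / α) : ℝ) = -(α / (1 + α)) := by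
      field_simp
      ring
    rw [this, xiPhase]
    push_cast
    ring
  have hcot := one_add_mul_cot_add_mul_cot_add_I (x := θ) (y := splitAngle (1 / α) θ)
    (by exact_mod_cast (sin_pos_of_mem_Ioo hθ).ne')
    (by exact_mod_cast (sin_splitAngle_pos hβ hθ).ne') α
  rw [← Complex.ofReal_add, eq_sub_of_add_eq (add_splitAngle_add_splitAngle hα θ),
    ← Complex.ofReal_sin, sin_pi_sub, ← xiPhase] at hcot
  refine ((hmod.ofReal_comp.mul hphase).const_sub 1).congr_deriv ?_
  push_cast at hcot ⊢
  rw [mul_assoc (1 + (α : ℂ)), ← div_div, div_right_comm, ← hcot]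
  ring

lemma exp_sub_Th_eq {α θ : ℝ} (hα : 0 < α) (hθ : θ ∈ Ioo 0 π) :
    Complex.exp (Complex.I * splitAngle α θ) - Th (1 / α) θ =
      (sin θ - ((1 + α) * sin (splitAngle α θ) : ℝ) * xiPhase α θ) /
        ((1 + α) * sin (splitAngle (1 / α) θ)) := by
  have hs' := sin_splitAngle_pos (by positivity : 0 ≤ 1 / α) hθ
  have hsum : sin θ = sin (splitAngle (1 / α) θ + splitAngle α θ) := by
    rw [← sin_pi_sub, ← add_splitAngle_add_splitAngle hα θ, add_assoc, add_sub_cancel_left]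
  have hrot := sin_mul_exp_add_sin_mul_exp (splitAngle (1 / α) θ) (splitAngle α θ)
  have hT : Th (1 / α) θ * ((1 + α) * sin (splitAngle (1 / α) θ)) = α * sin θ := by
    rw [Th_eq]
    field_simp
    ring
  rw [eq_div_iff (by exact_mod_cast (by positivity)), xiPhase]
  have hTc := congrArg ((↑) : ℝ → ℂ) hT
  have hsumc := congrArg ((↑) : ℝ → ℂ) hsum
  push_cast at hTc hsumc ⊢
  linear_combination (1 + (α : ℂ)) * hrot - hTc - (1 + (α : ℂ)) * hsumc

lemma phase_second_deriv_eq_neg_mul {α θ : ℝ} (hα : 0 < α) (hθ : θ ∈ Ioo 0 π) :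
    (((1 + α) / (4 * α ^ 2) : ℝ) : ℂ) *
        Complex.exp (-Complex.I * ((π - 2 * α * (π - θ) / (1 + α) : ℝ) : ℂ)) *
        ((Th (1 / α) θ ^ (1 - 2 * α) : ℝ) : ℂ) * deriv (xi α) θ ^ 2 /
      (Complex.exp (Complex.I * (((π - θ) / (1 + α) : ℝ) : ℂ)) - Th (1 / α) θ) =
    ((-(Th (1 / α) θ / (sin θ ^ 2 * sin (splitAngle (1 / α) θ))) : ℝ) : ℂ) *
      ((((1 + α) * sin (splitAngle α θ) : ℝ) - sin θ * xiPhase α θ) ^ 2 /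
        (sin θ - ((1 + α) * sin (splitAngle α θ) : ℝ) * xiPhase α θ)) := by
  have hβ : 0 ≤ 1 / α := by positivity
  have hα0 : (α : ℂ) ≠ 0 := by exact_mod_cast hα.ne'
  have hα1 : (1 : ℂ) + α ≠ 0 := by exact_mod_cast (by positivity : 1 + α ≠ 0)
  have hs : (sin θ : ℂ) ≠ 0 := by exact_mod_cast (sin_pos_of_mem_Ioo hθ).ne'
  have hp : (sin (splitAngle (1 / α) θ) : ℂ) ≠ 0 := by
    exact_mod_cast (sin_splitAngle_pos hβ hθ).ne'
  have hpow : ((Th (1 / α) θ ^ (1 - 2 * α) : ℝ) : ℂ) * ((Th (1 / α) θ ^ α : ℝ) : ℂ) ^ 2 =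
      Th (1 / α) θ := by
    exact_mod_cast rpow_one_sub_two_mul_mul_rpow_sq (Th_pos hβ hθ) α
  have hphase := exp_mul_xiPhase_sq hα θ
  rw [(hasDerivAt_xi hα hθ).deriv]
  change _ / (Complex.exp (Complex.I * splitAngle α θ) - _) = _
  rw [exp_sub_Th_eq hα hθ]
  generalize (((1 + α) * sin (splitAngle α θ) : ℝ) : ℂ) - sin θ * xiPhase α θ = N
  generalize (sin θ : ℂ) - ((1 + α) * sin (splitAngle α θ) : ℝ) * xiPhase α θ = M
  generalize Complex.exp _ = X at hphase ⊢
  generalize xiPhase α θ = z at hphase ⊢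
  generalize ((Th (1 / α) θ ^ (1 - 2 * α) : ℝ) : ℂ) = P at hpow ⊢
  generalize ((Th (1 / α) θ ^ α : ℝ) : ℂ) = Q at hpow ⊢
  push_cast at hs hp ⊢
  calc _ = X * z ^ 2 * (P * Q ^ 2) / (sin θ ^ 2 * sin (splitAngle (1 / α) θ)) * (N ^ 2 / M) := by
        push_cast
        field_simp
        ring
    _ = _ := by
        rw [hphase, hpow]
        push_cast
        ring

theorem stmt10 (α θ : ℝ) (hα : 1 ≤ α) (hθ : θ ∈ Set.Ioo 0 Real.pi) :
    (((((1 + α) / (4 * α^2) : ℝ)) : ℂ) *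
        Complex.exp (-Complex.I * ((Real.pi - 2 * α * (Real.pi - θ) / (1 + α) : ℝ) : ℂ)) *
        (((Th (1/α) θ) ^ (1 - 2*α) : ℝ) : ℂ) * (deriv (xi α) θ)^2 /
      (Complex.exp (Complex.I * (((Real.pi - θ) / (1 + α) : ℝ) : ℂ)) -
        ((Th (1/α) θ : ℝ) : ℂ))).re < 0 := by
  have hα0 : 0 < α := by linarith
  have hβ : 0 ≤ 1 / α := by positivity
  have hs : 0 < sin θ := sin_pos_of_mem_Ioo hθ
  have hp : 0 < sin (splitAngle (1 / α) θ) := sin_splitAngle_pos hβ hθ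
  have hT : 0 < Th (1 / α) θ := Th_pos hβ hθ
  have hre : (1 + α) * sin (splitAngle α θ) * (xiPhase α θ).re ≤ sin θ := by
    rw [xiPhase_re]
    exact one_add_mul_sin_splitAngle_mul_cos_le hα hθ
  rw [phase_second_deriv_eq_neg_mul hα0 hθ, Complex.re_ofReal_mul]
  exact mul_neg_of_neg_of_pos (neg_neg_of_pos (by positivity))
    (re_sub_mul_sq_div_pos (norm_xiPhase α θ) hs (sin_lt_one_add_mul_sin_splitAngle hα0 hθ) hre)
end

section
/- Fix a real α > 0 and define d(φ) := (1+α)·cot φ + α·cot((π−φ)/(1+1/α)) for φ ∈ (0, π). Then d is strictly decreasing on (0, π), d(φ) → +∞ as φ → 0⁺, and d(φ) → 0 as φ → π⁻. Consequently, there exists a unique φ₀ ∈ (0, π) with d(φ₀) = 1. -/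
open Real Filter Set Topology

/-- `dfun α φ = (1+α)·cot φ + α·cot((π−φ)/(1+1/α))`. -/
noncomputable def dfun (α φ : ℝ) : ℝ :=
  (1 + α) * Real.cot φ + α * Real.cot ((Real.pi - φ) / (1 + 1/α))

/-!
Put `k = α / (1 + α)`, so that `0 < k < 1`, and `θ = π - φ`. Then
`d(φ) = (1 + α) (k cot (k θ) - cot θ)`. The bracket has derivative
`1 / sin² θ - k² / sin² (k θ)` in `θ`, which is positive on `(0, π)` because `k sin θ < sin (k θ)`
by strict concavity of the sine. As `θ → 0⁺` both terms of the bracket have the principal part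
`1 / θ`, so it tends to `0`; as `θ → π⁻` only `-cot θ` blows up.
-/

section ConstSub

variable {G : Type*} [AddCommGroup G] [Preorder G] [AddLeftStrictMono G] [TopologicalSpace G]
  [ContinuousSub G]

theorem tendsto_const_sub_nhdsLT (a b : G) : Tendsto (fun x ↦ a - x) (𝓝[<] b) (𝓝[>] (a - b)) :=
  (continuous_const.sub continuous_id).continuousWithinAt.tendsto_nhdsWithin
    fun _ hx ↦ sub_lt_sub_left hx a

theorem tendsto_const_sub_nhdsGT (a b : G) : Tendsto (fun x ↦ a - x) (𝓝[>] b) (𝓝[<] (a - b)) :=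
  (continuous_const.sub continuous_id).continuousWithinAt.tendsto_nhdsWithin
    fun _ hx ↦ sub_lt_sub_left hx a

end ConstSub

theorem pi_sub_mem_Ioo {x : ℝ} (hx : x ∈ Ioo 0 π) : π - x ∈ Ioo 0 π :=
  ⟨sub_pos.2 hx.2, sub_lt_self π hx.1⟩

theorem cot_pi_sub (x : ℝ) : cot (π - x) = -cot x := by
  rw [← tan_inv_eq_cot, ← tan_inv_eq_cot, tan_pi_sub, inv_neg]

theorem hasDerivAt_cot {x : ℝ} (hx : sin x ≠ 0) : HasDerivAt cot (-(1 / sin x ^ 2)) x := by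
  have hquot : HasDerivAt cot ((-sin x * sin x - cos x * cos x) / sin x ^ 2) x :=
    ((hasDerivAt_cos x).div (hasDerivAt_sin x) hx).congr_of_eventuallyEq
      (.of_forall cot_eq_cos_div_sin)
  convert hquot using 1
  rw [← neg_div]
  congr 1
  linear_combination sin_sq_add_cos_sq x

theorem cot_lt_inv {x : ℝ} (hx₀ : 0 < x) (hx : x < π / 2) : cot x < x⁻¹ := by
  rw [← tan_inv_eq_cot]
  exact inv_strictAnti₀ hx₀ (lt_tan hx₀ hx)

theorem inv_sub_half_le_cot {x : ℝ} (hx₀ : 0 < x) (hx : x ≤ π / 2) : x⁻¹ - x / 2 ≤ cot x := by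
  have hsin : 0 < sin x := sin_pos_of_pos_of_lt_pi hx₀ (by linarith)
  have hcos : 0 ≤ cos x := cos_nonneg_of_neg_pi_div_two_le_of_le (by linarith) hx
  calc x⁻¹ - x / 2 = (1 - x ^ 2 / 2) / x := by field_simp
    _ ≤ cos x / x := by gcongr; exact one_sub_sq_div_two_le_cos
    _ ≤ cos x / sin x := by gcongr; exact sin_le hx₀.le
    _ = cot x := (cot_eq_cos_div_sin x).symm

theorem tendsto_cot_sub_inv_nhdsGT_zero :
    Tendsto (fun x : ℝ ↦ cot x - x⁻¹) (𝓝[>] 0) (𝓝 0) := by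
  have hlower : Tendsto (fun x : ℝ ↦ -(x / 2)) (𝓝[>] 0) (𝓝 0) :=
    Continuous.tendsto' (by fun_prop) 0 0 (by simp) |>.mono_left nhdsWithin_le_nhds
  have hnear : ∀ᶠ x in 𝓝[>] (0 : ℝ), x ∈ Ioo 0 (π / 2) := Ioo_mem_nhdsGT pi_div_two_pos
  refine tendsto_of_tendsto_of_tendsto_of_le_of_le' hlower tendsto_const_nhds ?_ ?_
  · filter_upwards [hnear] with x hx
    linarith [inv_sub_half_le_cot hx.1 hx.2.le]
  · filter_upwards [hnear] with x hx
    exact (sub_neg.2 (cot_lt_inv hx.1 hx.2)).le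

theorem tendsto_cot_nhdsGT_zero : Tendsto cot (𝓝[>] 0) atTop :=
  (tendsto_cot_sub_inv_nhdsGT_zero.add_atTop tendsto_inv_nhdsGT_zero).congr
    fun x ↦ sub_add_cancel (cot x) x⁻¹

theorem tendsto_cot_nhdsLT_pi : Tendsto cot (𝓝[<] π) atBot := by
  rw [← tendsto_neg_atTop_iff]
  have hrefl : Tendsto (fun x ↦ π - x) (𝓝[<] π) (𝓝[>] 0) := by
    simpa only [sub_self] using tendsto_const_sub_nhdsLT π π
  exact (tendsto_cot_nhdsGT_zero.comp hrefl).congr cot_pi_sub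

theorem mul_sin_lt_sin_mul {k θ : ℝ} (hk : k ∈ Ioo 0 1) (hθ : θ ∈ Ioc 0 π) :
    k * sin θ < sin (k * θ) := by
  simpa using strictConcaveOn_sin_Icc.2 (left_mem_Icc.2 pi_pos.le) (Ioc_subset_Icc_self hθ)
    hθ.1.ne (sub_pos.2 hk.2) hk.1 (sub_add_cancel 1 k)

theorem sin_mul_pos {k θ : ℝ} (hk : k ∈ Ioo 0 1) (hθ : θ ∈ Ioc 0 π) : 0 < sin (k * θ) :=
  (mul_nonneg hk.1.le (sin_nonneg_of_mem_Icc (Ioc_subset_Icc_self hθ))).trans_lt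
    (mul_sin_lt_sin_mul hk hθ)

/-- The difference `k cot (k θ) - cot θ` of the logarithmic derivatives of `sin (k θ)` and `sin θ`.
It is `dfun` up to a factor, in the reflected variable `θ = π - φ`. -/
noncomputable def cotGap (k θ : ℝ) : ℝ :=
  k * cot (k * θ) - cot θ

section cotGap

variable {k : ℝ}

theorem hasDerivAt_cotGap {θ : ℝ} (hθ : sin θ ≠ 0) (hkθ : sin (k * θ) ≠ 0) :
    HasDerivAt (cotGap k) (1 / sin θ ^ 2 - k ^ 2 / sin (k * θ) ^ 2) θ := by
  have hinner : HasDerivAt (fun x ↦ k * x) k θ := by simpa using (hasDerivAt_id θ).const_mul k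
  exact ((((hasDerivAt_cot hkθ).comp θ hinner).const_mul k).sub
    (hasDerivAt_cot hθ)).congr_deriv (by ring)

theorem continuousOn_cotGap (hk : k ∈ Ioo 0 1) : ContinuousOn (cotGap k) (Ioo 0 π) := fun _ hθ ↦
  (hasDerivAt_cotGap (sin_pos_of_mem_Ioo hθ).ne'
    (sin_mul_pos hk (Ioo_subset_Ioc_self hθ)).ne').continuousAt.continuousWithinAt

theorem strictMonoOn_cotGap (hk : k ∈ Ioo 0 1) : StrictMonoOn (cotGap k) (Ioo 0 π) := by
  refine strictMonoOn_of_deriv_pos (convex_Ioo 0 π) (continuousOn_cotGap hk) fun θ hθ ↦ ?_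
  rw [interior_Ioo] at hθ
  have hsin : 0 < sin θ := sin_pos_of_mem_Ioo hθ
  have hsink : 0 < sin (k * θ) := sin_mul_pos hk (Ioo_subset_Ioc_self hθ)
  have hsq : (k * sin θ) ^ 2 < sin (k * θ) ^ 2 :=
    pow_lt_pow_left₀ (mul_sin_lt_sin_mul hk (Ioo_subset_Ioc_self hθ))
      (mul_nonneg hk.1.le hsin.le) two_ne_zero
  rw [(hasDerivAt_cotGap hsin.ne' hsink.ne').deriv, sub_pos,
    div_lt_div_iff₀ (by positivity) (by positivity), one_mul, ← mul_pow]
  exact hsq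

theorem tendsto_cotGap_nhdsGT_zero (hk : 0 < k) : Tendsto (cotGap k) (𝓝[>] 0) (𝓝 0) := by
  have hscale : Tendsto (fun θ ↦ k * θ) (𝓝[>] 0) (𝓝[>] 0) :=
    tendsto_iff_comap.2 (comap_mulLeft_nhdsGT_zero hk).ge
  have hregular : Tendsto (fun θ ↦ k * (cot (k * θ) - (k * θ)⁻¹) - (cot θ - θ⁻¹))
      (𝓝[>] 0) (𝓝 0) := by
    simpa using ((tendsto_cot_sub_inv_nhdsGT_zero.comp hscale).const_mul k).sub
      tendsto_cot_sub_inv_nhdsGT_zero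
  refine hregular.congr fun θ ↦ ?_
  have hpole : k * (k * θ)⁻¹ = θ⁻¹ := by rw [mul_inv, mul_inv_cancel_left₀ hk.ne']
  rw [cotGap, mul_sub, hpole, sub_sub_sub_cancel_right]

theorem tendsto_cotGap_nhdsLT_pi (hk : sin (k * π) ≠ 0) :
    Tendsto (cotGap k) (𝓝[<] π) atTop := by
  have hcont : ContinuousAt (fun θ ↦ k * cot (k * θ)) π :=
    continuousAt_const.mul ((hasDerivAt_cot hk).continuousAt.comp' (by fun_prop))
  exact (hcont.tendsto.mono_left nhdsWithin_le_nhds).add_atTop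
    (tendsto_neg_atTop_iff.2 tendsto_cot_nhdsLT_pi)

end cotGap

section dfun

variable {α : ℝ}

theorem div_one_add_mem_Ioo (hα : 0 < α) : α / (1 + α) ∈ Ioo 0 1 :=
  ⟨by positivity, (div_lt_one (by positivity)).2 (lt_one_add α)⟩

theorem dfun_eq_mul_cotGap (hα₀ : α ≠ 0) (hα₁ : 1 + α ≠ 0) :
    dfun α = fun φ ↦ (1 + α) * cotGap (α / (1 + α)) (π - φ) := by
  funext φ
  have harg : (π - φ) / (1 + 1 / α) = α / (1 + α) * (π - φ) := by
    rw [one_add_div hα₀, add_comm α 1, div_div_eq_mul_div, mul_comm, mul_div_right_comm]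
  rw [dfun, cotGap, harg, cot_pi_sub]
  field_simp
  ring

theorem continuousOn_dfun (hα : 0 < α) : ContinuousOn (dfun α) (Ioo 0 π) := by
  rw [dfun_eq_mul_cotGap hα.ne' (by positivity)]
  exact continuousOn_const.mul ((continuousOn_cotGap (div_one_add_mem_Ioo hα)).comp
    (by fun_prop) fun _ ↦ pi_sub_mem_Ioo)

theorem strictAntiOn_dfun (hα : 0 < α) : StrictAntiOn (dfun α) (Ioo 0 π) := by
  intro x hx y hy hxy
  simp only [dfun_eq_mul_cotGap hα.ne' (by positivity)]
  gcongr
  exact strictMonoOn_cotGap (div_one_add_mem_Ioo hα) (pi_sub_mem_Ioo hy) (pi_sub_mem_Ioo hx)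
    (sub_lt_sub_left hxy π)

theorem tendsto_dfun_nhdsGT_zero (hα : 0 < α) : Tendsto (dfun α) (𝓝[>] 0) atTop := by
  rw [dfun_eq_mul_cotGap hα.ne' (by positivity)]
  have hsin : sin (α / (1 + α) * π) ≠ 0 :=
    (sin_mul_pos (div_one_add_mem_Ioo hα) (right_mem_Ioc.2 pi_pos)).ne'
  have hrefl : Tendsto (fun φ ↦ π - φ) (𝓝[>] 0) (𝓝[<] π) := by
    simpa only [sub_zero] using tendsto_const_sub_nhdsGT π 0
  exact ((tendsto_cotGap_nhdsLT_pi hsin).comp hrefl).const_mul_atTop (by positivity)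

theorem tendsto_dfun_nhdsLT_pi (hα : 0 < α) : Tendsto (dfun α) (𝓝[<] π) (𝓝 0) := by
  rw [dfun_eq_mul_cotGap hα.ne' (by positivity)]
  have hrefl : Tendsto (fun φ ↦ π - φ) (𝓝[<] π) (𝓝[>] 0) := by
    simpa only [sub_self] using tendsto_const_sub_nhdsLT π π
  simpa using ((tendsto_cotGap_nhdsGT_zero (div_one_add_mem_Ioo hα).1).comp hrefl).const_mul (1 + α)

theorem existsUnique_dfun_eq (hα : 0 < α) {c : ℝ} (hc : 0 < c) :
    ∃! φ, φ ∈ Ioo 0 π ∧ dfun α φ = c := by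
  obtain ⟨φ, hφ, hφc⟩ : c ∈ dfun α '' Ioo 0 π :=
    isPreconnected_Ioo.intermediate_value_Ioi (le_principal_iff.2 (Ioo_mem_nhdsLT pi_pos))
      (le_principal_iff.2 (Ioo_mem_nhdsGT pi_pos)) (continuousOn_dfun hα)
      (tendsto_dfun_nhdsLT_pi hα) (tendsto_dfun_nhdsGT_zero hα) hc
  exact ⟨φ, ⟨hφ, hφc⟩, fun ψ hψ ↦
    (strictAntiOn_dfun hα).injOn hψ.1 hφ (hψ.2.trans hφc.symm)⟩

end dfun

theorem stmt12 (α : ℝ) (hα : 0 < α) :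
    StrictAntiOn (dfun α) (Set.Ioo 0 Real.pi) ∧
    Tendsto (dfun α) (𝓝[>] (0:ℝ)) atTop ∧
    Tendsto (dfun α) (𝓝[<] Real.pi) (𝓝 0) ∧
    ∃! φ₀, φ₀ ∈ Set.Ioo 0 Real.pi ∧ dfun α φ₀ = 1 :=
  ⟨strictAntiOn_dfun hα, tendsto_dfun_nhdsGT_zero hα, tendsto_dfun_nhdsLT_pi hα,
    existsUnique_dfun_eq hα one_pos⟩
end

section
/- For any real α > 0 and φ ∈ (0, π): [(1+α)/sin φ] · (Θ_{1/α}(φ) − cos((π−φ)/(1+α))) = d(φ)·cos((π−φ)/(1+1/α)) − sin((π−φ)/(1+1/α)), where d(φ) := (1+α)·cot φ + α·cot((π−φ)/(1+1/α)). -/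
open Real Set

/-!
Since `1 + α` and `1 + 1/α` are conjugate exponents, the angles `φ`, `a = (π - φ) / (1 + α)` and
`b = (π - φ) / (1 + 1/α)` add up to `π`, so `cos a = -cos (φ + b)`. The left-hand side is therefore
`α / sin b + (1 + α) * (cos (φ + b) / sin φ)`, and both summands expand in terms of `cot φ`,
`cot b`, `cos b` and `sin b`.
-/

theorem div_one_add_add_div_one_add_one_div {K : Type*} [Field K] {α : K} (hα : α ≠ 0)
    (hα' : 1 + α ≠ 0) (x : K) : x / (1 + α) + x / (1 + 1 / α) = x := by
  rw [one_add_div hα, add_comm α 1]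
  field_simp

theorem cos_add_div_sin {x : ℝ} (hx : sin x ≠ 0) (y : ℝ) :
    cos (x + y) / sin x = cot x * cos y - sin y := by
  rw [cos_add, cot_eq_cos_div_sin]
  field_simp

theorem one_div_sin_eq_cot_mul_cos_add_sin {x : ℝ} (hx : sin x ≠ 0) :
    1 / sin x = cot x * cos x + sin x := by
  rw [cot_eq_cos_div_sin]
  field_simp
  exact (cos_sq_add_sin_sq x).symm

theorem cos_div_one_add_eq_neg_cos_add {α : ℝ} (hα : α ≠ 0) (hα' : 1 + α ≠ 0) (φ : ℝ) :
    cos ((π - φ) / (1 + α)) = -cos (φ + (π - φ) / (1 + 1 / α)) := by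
  rw [← cos_pi_sub]
  congr 1
  linear_combination div_one_add_add_div_one_add_one_div hα hα' (π - φ)

theorem one_add_div_sin_mul_Th_one_div {α φ : ℝ} (hα : α ≠ 0) (hα' : 1 + α ≠ 0)
    (hφ : sin φ ≠ 0) :
    (1 + α) / sin φ * Th (1 / α) φ = α * (1 / sin ((π - φ) / (1 + 1 / α))) := by
  rw [Th, one_add_div hα, add_comm α 1]
  field_simp

theorem sin_pi_sub_div_pos {φ c : ℝ} (hφ : φ ∈ Ioo 0 π) (hc : 1 ≤ c) :
    0 < sin ((π - φ) / c) := by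
  have hpos : 0 < π - φ := sub_pos.mpr hφ.2
  refine sin_pos_of_pos_of_lt_pi (by positivity) ?_
  calc (π - φ) / c ≤ π - φ := div_le_self hpos.le hc
    _ < π := sub_lt_self π hφ.1

theorem stmt15_general {α φ : ℝ} (hα : α ≠ 0) (hα' : 1 + α ≠ 0) (hφ : sin φ ≠ 0)
    (hb : sin ((π - φ) / (1 + 1 / α)) ≠ 0) :
    (1 + α) / sin φ * (Th (1 / α) φ - cos ((π - φ) / (1 + α))) =
      dfun α φ * cos ((π - φ) / (1 + 1 / α)) - sin ((π - φ) / (1 + 1 / α)) := by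
  rw [cos_div_one_add_eq_neg_cos_add hα hα', dfun]
  have hTh := one_add_div_sin_mul_Th_one_div hα hα' hφ
  set b := (π - φ) / (1 + 1 / α)
  calc (1 + α) / sin φ * (Th (1 / α) φ - -cos (φ + b))
      = (1 + α) / sin φ * Th (1 / α) φ + (1 + α) * (cos (φ + b) / sin φ) := by ring
    _ = α * (cot b * cos b + sin b) + (1 + α) * (cot φ * cos b - sin b) := by
        rw [hTh, one_div_sin_eq_cot_mul_cos_add_sin hb, cos_add_div_sin hφ]
    _ = ((1 + α) * cot φ + α * cot b) * cos b - sin b := by ring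

theorem stmt15 (α : ℝ) (hα : 0 < α) (φ : ℝ) (hφ : φ ∈ Set.Ioo 0 Real.pi) :
    ((1 + α) / Real.sin φ) * (Th (1/α) φ - Real.cos ((Real.pi - φ) / (1 + α))) =
      dfun α φ * Real.cos ((Real.pi - φ) / (1 + 1/α)) -
        Real.sin ((Real.pi - φ) / (1 + 1/α)) :=
  stmt15_general hα.ne' (by positivity) (sin_pos_of_mem_Ioo hφ).ne'
    (sin_pi_sub_div_pos hφ (le_add_of_nonneg_right (by positivity))).ne'
end
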